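/- arXiv:1801.01556 — 2 statements merged into one kernel-verified Lean document; each statement's English description precedes it below -/
import Mathlib

section
/- Let G be a graph on n vertices, k ≥ 5 an integer, and 0 ≤ m ≤ k. Let z_1, ..., z_m be vertices of G such that the quantities n_1, ..., n_m determined by this m-tuple (as in the definition of the weight) are all positive. Then the sum of the weights w(D) over all good k-tuples D whose first m entries are z_1, ..., z_m is at most (n_1 n_2 ⋯ n_m)^{-1}. -/
open Finset
open scoped Classical

/-- Index transposition swapping 0 and 1. -/
def swap01 (i : ℕ) : ℕ := if i = 0 then 1 else if i = 1 then 0 else i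

/-- `y 0, y 1, …, y (k-1)` is an induced cycle of length `k` in `G`. -/
def IsInducedCycle {V : Type*} (G : SimpleGraph V) (k : ℕ) (y : ℕ → V) : Prop :=
  (∀ i < k, ∀ j < k, y i = y j → i = j) ∧
  ∀ i < k, ∀ j < k, (G.Adj (y i) (y j) ↔ (i + 1) % k = j ∨ (j + 1) % k = i)

/-- `y 0, y 1, …, y (m-1)` is an induced path on `m` vertices in `G`. -/
def IsInducedPath {V : Type*} (G : SimpleGraph V) (m : ℕ) (y : ℕ → V) : Prop :=
  (∀ i < m, ∀ j < m, y i = y j → i = j) ∧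
  ∀ i < m, ∀ j < m, (G.Adj (y i) (y j) ↔ i + 1 = j ∨ j + 1 = i)

/-- `(z 0, …, z (k-1))` is a good k-tuple: `z 1, z 0, z 2, …, z (k-1)` is an induced cycle. -/
def IsGoodTuple {V : Type*} (G : SimpleGraph V) (k : ℕ) (z : ℕ → V) : Prop :=
  IsInducedCycle G k (fun i => z (swap01 i))

/-- The sequence `z 1, z 0, z 2, …, z (i-2), x` of length `i`. -/
def extSeq {V : Type*} (z : ℕ → V) (i : ℕ) (x : V) : ℕ → V :=
  fun p => if p = i - 1 then x else z (swap01 p)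

/-- The quantity `n_i` associated with the (prefix of the) tuple `z`. -/
noncomputable def nq {V : Type*} (G : SimpleGraph V) (k : ℕ) (z : ℕ → V) (i : ℕ) : ℕ :=
  if i = 1 then Nat.card V
  else if i = 2 then Nat.card {x : V // G.Adj (z 0) x}
  else if i = 3 then Nat.card {x : V // G.Adj (z 0) x ∧ ¬ G.Adj (z 1) x}
  else if i < k then Nat.card {x : V // IsInducedPath G i (extSeq z i x)}
  else Nat.card {x : V // IsInducedCycle G k (extSeq z k x)}

/-- The weight `w(D) = ∏_{i=1}^k 1/n_i` of a tuple. -/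
noncomputable def wt {V : Type*} (G : SimpleGraph V) (k : ℕ) (z : ℕ → V) : ℝ :=
  ∏ i ∈ Finset.Icc 1 k, ((nq G k z i : ℝ))⁻¹

/-- View a `Fin k`-tuple as an `ℕ`-indexed tuple. -/
def tupFun {V : Type*} {k : ℕ} (hk : 0 < k) (z : Fin k → V) : ℕ → V :=
  fun i => z ⟨i % k, Nat.mod_lt i hk⟩

/-- The good tuple `D_j = (v_j, v_{j-1}, v_{j+1}, …, v_{j+k-2})` (0-indexed `j`, indices mod `k`). -/
def Dtup {V : Type*} (k : ℕ) (v : ℕ → V) (j : ℕ) : ℕ → V :=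
  fun p => if p = 0 then v (j % k)
    else if p = 1 then v ((j + k - 1) % k)
    else v ((j + p - 1) % k)

/-- The predicate counted by `nq`. -/
def cand {V : Type} (G : SimpleGraph V) (k : ℕ) (z : ℕ → V) (i : ℕ) (x : V) : Prop :=
  if i = 1 then True
  else if i = 2 then G.Adj (z 0) x
  else if i = 3 then G.Adj (z 0) x ∧ ¬ G.Adj (z 1) x
  else if i < k then IsInducedPath G i (extSeq z i x)
  else IsInducedCycle G k (extSeq z k x)

theorem nq_eq_cand {V : Type} [Fintype V] (G : SimpleGraph V) (k : ℕ) (z : ℕ → V) (i : ℕ) :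
    nq G k z i = (Finset.univ.filter (fun x => cand G k z i x)).card := by
  unfold nq cand
  split_ifs <;> simp [Nat.card_eq_fintype_card, Fintype.card_subtype]

theorem swap01_lt {p i : ℕ} (hi : 2 ≤ i) (h : p < i) : swap01 p < i := by
  unfold swap01; split_ifs <;> omega

theorem path_congr {V : Type} (G : SimpleGraph V) (m : ℕ) (y y' : ℕ → V)
    (h : ∀ p < m, y p = y' p) : IsInducedPath G m y → IsInducedPath G m y' := by
  rintro ⟨h1, h2⟩
  refine ⟨fun i hi j hj => ?_, fun i hi j hj => ?_⟩
  · rw [← h i hi, ← h j hj]; exact h1 i hi j hj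
  · rw [← h i hi, ← h j hj]; exact h2 i hi j hj

theorem cycle_congr {V : Type} (G : SimpleGraph V) (m : ℕ) (y y' : ℕ → V)
    (h : ∀ p < m, y p = y' p) : IsInducedCycle G m y → IsInducedCycle G m y' := by
  rintro ⟨h1, h2⟩
  refine ⟨fun i hi j hj => ?_, fun i hi j hj => ?_⟩
  · rw [← h i hi, ← h j hj]; exact h1 i hi j hj
  · rw [← h i hi, ← h j hj]; exact h2 i hi j hj

theorem extSeq_congr {V : Type} (z z' : ℕ → V) (i : ℕ) (x : V) (hi : 4 ≤ i)
    (h : ∀ j, j + 1 < i → z j = z' j) : ∀ p < i, extSeq z i x p = extSeq z' i x p := by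
  intro p hp
  unfold extSeq
  split_ifs with hc
  · rfl
  · apply h
    have := swap01_lt (p := p) (i := i - 1) (by omega) (by omega)
    omega

theorem cand_imp {V : Type} (G : SimpleGraph V) (k : ℕ) (hk : 5 ≤ k) (z z' : ℕ → V) (i : ℕ)
    (hi : 1 ≤ i) (hik : i ≤ k)
    (h : ∀ j, j + 1 < i → z j = z' j) (x : V) : cand G k z i x → cand G k z' i x := by
  unfold cand
  split_ifs with h1 h2 h3 h4
  · exact id
  · rw [h 0 (by omega)]; exact id
  · rw [h 0 (by omega), h 1 (by omega)]; exact id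
  · exact path_congr G i _ _ (extSeq_congr z z' i x (by omega) h)
  · have : i = k := by omega
    subst this
    exact cycle_congr G i _ _ (extSeq_congr z z' i x (by omega) h)

theorem nq_congr {V : Type} [Fintype V] (G : SimpleGraph V) (k : ℕ) (hk : 5 ≤ k)
    (z z' : ℕ → V) (i : ℕ) (hi : 1 ≤ i) (hik : i ≤ k)
    (h : ∀ j, j + 1 < i → z j = z' j) : nq G k z i = nq G k z' i := by
  rw [nq_eq_cand, nq_eq_cand]
  congr 1
  ext x
  simp only [Finset.mem_filter, Finset.mem_univ, true_and]
  exact ⟨cand_imp G k hk z z' i hi hik h x,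
    cand_imp G k hk z' z i hi hik (fun j hj => (h j hj).symm) x⟩

theorem extSeq_self {V : Type} (t : ℕ → V) (i : ℕ) (hi : 4 ≤ i) (p : ℕ) :
    extSeq t i (t (i - 1)) p = t (swap01 p) := by
  unfold extSeq
  split_ifs with hc
  · subst hc
    congr 1
    unfold swap01
    split_ifs <;> omega
  · rfl

theorem cand_of_good {V : Type} (G : SimpleGraph V) (k : ℕ) (hk : 5 ≤ k) (t : ℕ → V)
    (ht : IsGoodTuple G k t) (i : ℕ) (hi : 1 ≤ i) (hik : i ≤ k) :
    cand G k t i (t (i - 1)) := by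
  have e1 : (0 + 1) % k = 1 := Nat.mod_eq_of_lt (by omega)
  have e2 : (1 + 1) % k = 2 := Nat.mod_eq_of_lt (by omega)
  have e3 : (2 + 1) % k = 3 := Nat.mod_eq_of_lt (by omega)
  unfold cand
  split_ifs with h1 h2 h3 h4
  · subst h2
    have := (ht.2 1 (by omega) 0 (by omega)).2 (Or.inr e1)
    simpa [swap01] using this
  · subst h3
    constructor
    · have := (ht.2 1 (by omega) 2 (by omega)).2 (Or.inl e2)
      simpa [swap01] using this
    · have := (ht.2 0 (by omega) 2 (by omega))
      rw [e1, e3] at this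
      simpa [swap01] using this
  · refine path_congr G i (fun p => t (swap01 p)) _ (fun p _ => (extSeq_self t i (by omega) p).symm)
      ⟨fun a ha b hb => ht.1 a (by omega) b (by omega), fun a ha b hb => ?_⟩
    rw [ht.2 a (by omega) b (by omega), Nat.mod_eq_of_lt (by omega : a + 1 < k),
      Nat.mod_eq_of_lt (by omega : b + 1 < k)]
  · have : i = k := by omega
    subst this
    exact cycle_congr G i (fun p => t (swap01 p)) _
      (fun p _ => (extSeq_self t i (by omega) p).symm) ht

theorem tupFun_lt {V : Type} {k : ℕ} (hk : 0 < k) (D : Fin k → V) (i : ℕ) (hi : i < k) :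
    tupFun hk D i = D ⟨i, hi⟩ := by
  unfold tupFun
  congr 1
  exact Fin.ext (Nat.mod_eq_of_lt hi)

theorem sum_aux {V : Type} [Fintype V] (G : SimpleGraph V) (k : ℕ) (hk : 5 ≤ k) (d : ℕ) :
    ∀ m, m + d = k → ∀ z : ℕ → V,
    ∑ D ∈ Finset.univ.filter (fun D : Fin k → V =>
        IsGoodTuple G k (tupFun (by omega) D) ∧ ∀ i : Fin k, (i : ℕ) < m → D i = z i),
        wt G k (tupFun (by omega) D)
      ≤ (∏ i ∈ Finset.Icc 1 m, (nq G k z i : ℝ))⁻¹ := by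
  induction d with
  | zero =>
    intro m hm z
    obtain rfl : m = k := by omega
    have hnn : 0 ≤ (∏ i ∈ Finset.Icc 1 m, (nq G m z i : ℝ))⁻¹ := by positivity
    refine (Finset.sum_le_card_nsmul _ _ ((∏ i ∈ Finset.Icc 1 m, (nq G m z i : ℝ))⁻¹) ?_).trans ?_
    · intro D hD
      simp only [Finset.mem_filter, Finset.mem_univ, true_and] at hD
      unfold wt
      rw [Finset.prod_inv_distrib]
      apply le_of_eq
      congr 1
      refine Finset.prod_congr rfl fun i hi => ?_
      rw [Finset.mem_Icc] at hi
      rw [nq_congr G m hk _ z i hi.1 hi.2]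
      intro j hj
      rw [tupFun_lt _ _ j (by omega)]
      exact hD.2 ⟨j, by omega⟩ (by simp; omega)
    · have hc : (Finset.univ.filter (fun D : Fin m → V =>
        IsGoodTuple G m (tupFun (by omega) D) ∧ ∀ i : Fin m, (i : ℕ) < m → D i = z i)).card ≤ 1 := by
        rw [Finset.card_le_one]
        intro a ha b hb
        simp only [Finset.mem_filter, Finset.mem_univ, true_and] at ha hb
        funext i
        rw [ha.2 i i.2, hb.2 i i.2]
      rw [nsmul_eq_mul]
      exact mul_le_of_le_one_left hnn (by exact_mod_cast hc)
  | succ d ih =>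
    intro m hm z
    have hmk : m < k := by omega
    set S := Finset.univ.filter (fun x => cand G k z (m + 1) x) with hS
    have hcard : S.card = nq G k z (m + 1) := (nq_eq_cand G k z (m + 1)).symm
    rw [← Finset.sum_fiberwise_of_maps_to (t := S) (g := fun D : Fin k → V => D ⟨m, hmk⟩)]
    · have hnn : 0 ≤ (∏ i ∈ Finset.Icc 1 m, (nq G k z i : ℝ))⁻¹ := by positivity
      refine (Finset.sum_le_card_nsmul _ _
        ((∏ i ∈ Finset.Icc 1 (m + 1), (nq G k z i : ℝ))⁻¹) ?_).trans ?_
      · intro x hx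
        have := ih (m + 1) (by omega) (Function.update z m x)
        refine le_trans (le_of_eq ?_) (this.trans (le_of_eq ?_))
        · rw [Finset.filter_filter]
          refine Finset.sum_congr ?_ fun _ _ => rfl
          ext D
          simp only [Finset.mem_filter, Finset.mem_univ, true_and]
          constructor
          · rintro ⟨⟨hg, hp⟩, hx⟩
            refine ⟨hg, fun i hi => ?_⟩
            by_cases him : (i : ℕ) = m
            · rw [him, Function.update_self, ← hx]
              congr 1
              exact Fin.ext him
            · rw [Function.update_of_ne him]
              exact hp i (by omega)
          · rintro ⟨hg, hp⟩
            refine ⟨⟨hg, fun i hi => ?_⟩, ?_⟩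
            · rw [hp i (by omega), Function.update_of_ne (by omega)]
            · rw [hp ⟨m, hmk⟩ (by simp), Function.update_self]
        · congr 1
          refine Finset.prod_congr rfl fun i hi => ?_
          rw [Finset.mem_Icc] at hi
          rw [nq_congr G k hk _ z i hi.1 (by omega)]
          intro j hj
          rw [Function.update_of_ne (by omega)]
      · rw [nsmul_eq_mul, hcard, Finset.prod_Icc_succ_top (by omega), mul_inv]
        rw [mul_comm (_⁻¹) (_⁻¹), ← mul_assoc]
        exact mul_le_of_le_one_left hnn (mul_inv_le_one)
    · intro D hD
      simp only [Finset.mem_filter, Finset.mem_univ, true_and, hS] at hD ⊢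
      have h := cand_of_good G k hk _ hD.1 (m + 1) (by omega) (by omega)
      rw [Nat.add_sub_cancel, tupFun_lt _ _ m hmk] at h
      refine cand_imp G k hk _ z (m + 1) (by omega) (by omega) (fun j hj => ?_) _ h
      rw [tupFun_lt _ _ j (by omega)]
      exact hD.2 ⟨j, by omega⟩ (by simp; omega)

/-- Let `G` be a graph on `n` vertices, `k ≥ 5` and `0 ≤ m ≤ k`. If
`z 0, …, z (m-1)` are vertices of `G` whose associated quantities `n_1, …, n_m` are all
positive, then the sum of the weights `w(D)` over all good `k`-tuples `D` whose first `m`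
entries are `z 0, …, z (m-1)` is at most `(n_1 ⋯ n_m)⁻¹`. -/
theorem sum_weights_prefix_le {V : Type} [Fintype V] (G : SimpleGraph V) (n k m : ℕ)
    (hn : Fintype.card V = n) (hk : 5 ≤ k) (hm : m ≤ k) (z : ℕ → V)
    (hpos : ∀ i, 1 ≤ i → i ≤ m → 0 < nq G k z i) :
    ∑ D ∈ Finset.univ.filter (fun D : Fin k → V =>
        IsGoodTuple G k (tupFun (by omega) D) ∧ ∀ i : Fin k, (i : ℕ) < m → D i = z i),
        wt G k (tupFun (by omega) D)
      ≤ (∏ i ∈ Finset.Icc 1 m, (nq G k z i : ℝ))⁻¹ := by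
  exact sum_aux G k hk (k - m) m (by omega) z
end

section
/- Let G be a graph on n vertices, k ≥ 5 an integer, and let v_1 v_2 ⋯ v_k be an induced cycle of length k in G. For j = 1, ..., k, let D_j = (v_j, v_{j−1}, v_{j+1}, v_{j+2}, ..., v_{j+k−2}) (indices modulo k) and let n_{j,i} denote the quantity n_i in the definition of the weight w(D_j). Then for every j = 1, ..., k, n_{j,2}/2 + n_{j,3}/2 + n_{j,4} + ⋯ + n_{j,k} ≤ n. -/
open Finset
open scoped Classical

/-- The property whose solutions are counted; index 3 stands for neighbours of `z 0`. -/
def PP {V : Type*} (G : SimpleGraph V) (k : ℕ) (z : ℕ → V) (i : ℕ) (x : V) : Prop :=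
  if i = 3 then G.Adj (z 0) x
  else if i < k then IsInducedPath G i (extSeq z i x)
  else IsInducedCycle G k (extSeq z k x)

theorem PP_adj {V : Type*} (G : SimpleGraph V) (k : ℕ) (hk : 5 ≤ k) (z : ℕ → V) (i : ℕ)
    (hi : 3 ≤ i) (hik : i ≤ k) (x : V) (h : PP G k z i x) : G.Adj (z (swap01 (i-2))) x := by
  unfold PP at h
  split_ifs at h with h1 h2
  · subst h1
    simpa [swap01] using h
  · have := (h.2 (i-2) (by omega) (i-1) (by omega)).2 (Or.inl (by omega))
    have e : i - 2 ≠ i - 1 := by omega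
    simpa [extSeq, e] using this
  · have hik' : i = k := by omega
    subst hik'
    have := (h.2 (i-2) (by omega) (i-1) (by omega)).2
      (Or.inl (by rw [Nat.mod_eq_of_lt (by omega)]; omega))
    have e : i - 2 ≠ i - 1 := by omega
    simpa [extSeq, e] using this

theorem PP_not_adj {V : Type*} (G : SimpleGraph V) (k : ℕ) (hk : 5 ≤ k) (z : ℕ → V) (m i : ℕ)
    (hm : 3 ≤ m) (hi : m < i) (hik : i ≤ k) (x : V) (h : PP G k z i x) :
    ¬ G.Adj (z (swap01 (m-2))) x := by
  unfold PP at h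
  intro ha
  have e : m - 2 ≠ i - 1 := by omega
  split_ifs at h with h1 h2
  · omega
  · have := (h.2 (m-2) (by omega) (i-1) (by omega)).1 (by simpa [extSeq, e] using ha)
    omega
  · have hik' : i = k := by omega
    subst hik'
    have := (h.2 (m-2) (by omega) (i-1) (by omega)).1 (by simpa [extSeq, e] using ha)
    rw [Nat.mod_eq_of_lt (by omega), Nat.sub_add_cancel (by omega), Nat.mod_self] at this
    omega

theorem sum_PP {V : Type} [Fintype V] (G : SimpleGraph V) (k : ℕ) (hk : 5 ≤ k) (z : ℕ → V) :
    ∑ i ∈ Finset.Icc 3 k, Nat.card {x : V // PP G k z i x} ≤ Fintype.card V := by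
  have h1 : ∀ i ∈ Finset.Icc 3 k, Nat.card {x : V // PP G k z i x}
      = (Finset.univ.filter (fun x => PP G k z i x)).card := by
    intro i _
    rw [Nat.card_eq_fintype_card, Fintype.card_subtype]
  rw [Finset.sum_congr rfl h1, ← Finset.card_biUnion]
  · exact Finset.card_le_univ _
  · intro a ha b hb hab
    rw [Finset.mem_coe, Finset.mem_Icc] at ha hb
    refine Finset.disjoint_left.2 ?_
    intro x hx hy
    rw [Finset.mem_filter] at hx hy
    rcases lt_or_gt_of_ne hab with h | h
    · exact PP_not_adj G k hk z a b ha.1 h hb.2 x hy.2 (PP_adj G k hk z a ha.1 ha.2 x hx.2)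
    · exact PP_not_adj G k hk z b a hb.1 h ha.2 x hx.2 (PP_adj G k hk z b hb.1 hb.2 x hy.2)

/-- Let `G` be a graph on `n` vertices, `k ≥ 5`, and `v 0, …, v (k-1)` an induced
cycle of length `k` in `G`. For each `j` (0-indexed, `j < k`), with `n_{j,i}` the quantity
`n_i` for the good tuple `D_j = (v_j, v_{j-1}, v_{j+1}, …, v_{j+k-2})`, we have
`n_{j,2}/2 + n_{j,3}/2 + n_{j,4} + ⋯ + n_{j,k} ≤ n`. -/
theorem weighted_count_le {V : Type} [Fintype V] (G : SimpleGraph V) (n k : ℕ)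
    (hn : Fintype.card V = n) (hk : 5 ≤ k) (v : ℕ → V) (hv : IsInducedCycle G k v)
    (j : ℕ) (hj : j < k) :
    (nq G k (Dtup k v j) 2 : ℝ) / 2 + (nq G k (Dtup k v j) 3 : ℝ) / 2
        + ∑ i ∈ Finset.Icc 4 k, (nq G k (Dtup k v j) i : ℝ) ≤ n := by
  generalize Dtup k v j = z
  have h := sum_PP G k hk z
  rw [hn, ← Finset.add_sum_Ioc_eq_sum_Icc (by omega : 3 ≤ k)] at h
  have e : Finset.Ioc 3 k = Finset.Icc 4 k := by
    ext a
    simp only [Finset.mem_Ioc, Finset.mem_Icc]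
    omega
  rw [e] at h
  have e2 : ∑ i ∈ Finset.Icc 4 k, Nat.card {x : V // PP G k z i x}
      = ∑ i ∈ Finset.Icc 4 k, nq G k z i := by
    refine Finset.sum_congr rfl fun i hi => ?_
    rw [Finset.mem_Icc] at hi
    have a1 : i ≠ 1 := by omega
    have a2 : i ≠ 2 := by omega
    have a3 : i ≠ 3 := by omega
    by_cases h4 : i < k <;> simp [nq, PP, a1, a2, a3, h4]
  have e3 : Nat.card {x : V // PP G k z 3 x} = nq G k z 2 := by
    simp [nq, PP]
  have e4 : nq G k z 3 ≤ nq G k z 2 := by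
    simp only [nq]
    norm_num
    rw [Fintype.card_subtype, Fintype.card_subtype]
    apply Finset.card_le_card
    intro x hx
    simp only [Finset.mem_filter] at hx ⊢
    exact ⟨hx.1, hx.2.1⟩
  rw [e2, e3] at h
  have h' : (nq G k z 2 : ℝ) + ∑ i ∈ Finset.Icc 4 k, (nq G k z i : ℝ) ≤ n := by
    exact_mod_cast h
  have e4' : (nq G k z 3 : ℝ) ≤ nq G k z 2 := by exact_mod_cast e4
  linarith
end
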